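/- Let n_e ∈ C²(ℝ) satisfy n_e(0) = 1, n_e'(0) = −1, and n_e'(Φ) < 0 for all Φ ∈ ℝ, let β ∈ (0,1), and set η(β) := β²/(2 − β²). Then there exist constants δ₀ > 0 and C > 0, both independent of β, such that the following holds. Let Φ_b > 0 and let Φ^s ∈ C¹([0,∞)) satisfy 0 ≤ Φ^s(x) ≤ Φ_b and |∂_xΦ^s(x)| ≤ Φ_b; let n ∈ C¹([0,∞)) with ∫₀^∞ e^{βx}(|n|² + |∂_x n|²) dx < ∞; and let φ ∈ C²([0,∞)) solve ∂_{xx}φ = n − (n_e(Φ^s + φ) − n_e(Φ^s)) on (0,∞) with φ(0) = 0, lim_{x→∞} φ(x) = 0 and ∫₀^∞ e^{βx} Σ_{j=0}^{2} |∂_x^j φ|² dx < ∞. If Φ_b + ‖n‖_{H¹(0,∞)} ≤ δ₀, then, writing ‖e^{βx/2} g‖² := ∫₀^∞ e^{βx}|g|² dx: (i) ‖e^{βx/2} φ‖² + 2(1 + η(β)) ‖e^{βx/2} ∂_xφ‖² ≤ (1 + η(β))² ‖e^{βx/2} n‖² + C (Φ_b + ‖n‖_{H¹}) ‖e^{βx/2}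 n‖²; and (ii) ‖e^{βx/2} ∂_{xx}φ‖² ≤ (1 + β²(1 + η(β))²) ‖e^{βx/2} n‖² + C (Φ_b + ‖n‖_{H¹}) ‖e^{βx/2} n‖². -/

import Mathlib

open MeasureTheory Real Set Filter

/-- A continuous function dominated by an integrable one on a half-line is integrable there. -/
theorem Continuous.integrableOn_Ioi_of_abs_le {f g : ℝ → ℝ} {a : ℝ} (hf : Continuous f)
    (hg : IntegrableOn g (Ioi a)) (h : ∀ x, |f x| ≤ g x) : IntegrableOn f (Ioi a) :=
  Integrable.mono' hg hf.aestronglyMeasurable (Eventually.of_forall h)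

/-- The one-dimensional Sobolev embedding `H¹(0,∞) ⊂ L^∞`, with constant one. -/
theorem abs_le_sqrt_integral_sq_add_deriv_sq {n : ℝ → ℝ} (hn : ContDiff ℝ 1 n)
    (hi : IntegrableOn (fun x => n x ^ 2 + deriv n x ^ 2) (Ioi 0)) {x : ℝ} (hx : 0 ≤ x) :
    |n x| ≤ √(∫ x in Ioi (0:ℝ), (n x ^ 2 + deriv n x ^ 2)) := by
  have hc := hn.continuous
  have hc' := hn.continuous_deriv le_rfl
  have hd : Differentiable ℝ n := hn.differentiable one_ne_zero
  have hsub : Ioi x ⊆ Ioi 0 := Ioi_subset_Ioi hx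
  have hi' := hi.mono_set hsub
  have h1 : IntegrableOn (fun y => n y ^ 2) (Ioi x) :=
    Continuous.integrableOn_Ioi_of_abs_le (by fun_prop) hi' fun y => by
      rw [abs_of_nonneg (by positivity)]; nlinarith [sq_nonneg (deriv n y)]
  have h2 : IntegrableOn (fun y => 2 * n y * deriv n y) (Ioi x) :=
    Continuous.integrableOn_Ioi_of_abs_le (by fun_prop) hi' fun y => by
      rw [abs_le]; constructor
      · nlinarith [sq_nonneg (n y + deriv n y)]
      · nlinarith [sq_nonneg (n y - deriv n y)]
  have hder : ∀ y, HasDerivAt (fun y => n y ^ 2) (2 * n y * deriv n y) y := fun y => by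
    simpa using (hd y).hasDerivAt.fun_pow 2
  have ht := tendsto_zero_of_hasDerivAt_of_integrableOn_Ioi (fun y _ => hder y) h2 h1
  have hI := integral_Ioi_of_hasDerivAt_of_tendsto' (fun y _ => hder y) h2 ht
  have hle : -∫ y in Ioi x, 2 * n y * deriv n y ≤ ∫ y in Ioi x, (n y ^ 2 + deriv n y ^ 2) := by
    rw [← integral_neg]
    exact integral_mono h2.neg hi' fun y => by
      simp only; nlinarith [sq_nonneg (n y + deriv n y)]
  have hmono : ∫ y in Ioi x, (n y ^ 2 + deriv n y ^ 2) ≤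
      ∫ y in Ioi (0:ℝ), (n y ^ 2 + deriv n y ^ 2) :=
    setIntegral_mono_set hi (Eventually.of_forall fun y => by positivity) hsub.eventuallyLE
  exact Real.abs_le_sqrt (by linarith)

/-- The second derivative is nonpositive at a local maximum. -/
theorem IsLocalMax.deriv_deriv_nonpos {f : ℝ → ℝ} {a : ℝ} (h : IsLocalMax f a)
    (hc : ContinuousAt f a) : deriv (deriv f) a ≤ 0 := by
  by_contra! hpos
  have hmin := isLocalMin_of_deriv_deriv_pos hpos h.deriv_eq_zero hc
  have heq : f =ᶠ[nhds a] fun _ => f a := by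
    filter_upwards [h, hmin] with x h1 h2 using le_antisymm h1 h2
  have h0 := heq.deriv.deriv_eq
  simp at h0
  linarith

/-- A function on the half-line that vanishes at both ends and is positive somewhere has an
interior maximum, where its second derivative is nonpositive. -/
theorem exists_interior_max_of_pos {f : ℝ → ℝ} (hc : Continuous f) (h0 : f 0 = 0)
    (ht : Tendsto f atTop (nhds 0)) {x : ℝ} (hx : 0 ≤ x) (hpos : 0 < f x) :
    ∃ y > 0, f x ≤ f y ∧ deriv (deriv f) y ≤ 0 := by
  obtain ⟨R, hR⟩ := eventually_atTop.1 (ht.eventually_lt_const hpos)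
  have hxR : x < R := by
    by_contra! h
    exact lt_irrefl _ (hR x h)
  obtain ⟨y, hy, hmax⟩ := isCompact_Icc.exists_isMaxOn ⟨x, hx, hxR.le⟩ hc.continuousOn
  have hxy : f x ≤ f y := hmax ⟨hx, hxR.le⟩
  have hy0 : 0 < y := by
    rcases hy.1.eq_or_lt with h | h
    · rw [← h, h0] at hxy; linarith
    · exact h
  have hyR : y < R := by
    by_contra! h
    linarith [hR y h]
  exact ⟨y, hy0, hxy, (hmax.isLocalMax (Icc_mem_nhds hy0 hyR)).deriv_deriv_nonpos hc.continuousAt⟩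

/-- Maximum principle: a solution `φ` of `φ'' = n - (g(Φ + φ) - g(Φ))` on the half-line vanishing at
both ends is bounded by `H / m` when `|n| ≤ H < m` and `g' ≤ -m` on the relevant range. -/
theorem abs_le_div_of_semilinear_ode {g Φs n φ : ℝ → ℝ} {m H : ℝ}
    (hg : Differentiable ℝ g) (hanti : StrictAnti g) (hm : 0 < m)
    (hgm : ∀ s ∈ Icc (-1:ℝ) 2, deriv g s ≤ -m) (hH : H < m)
    (hΦ : ∀ x > 0, Φs x ∈ Icc (0:ℝ) 1) (hn : ∀ x > 0, |n x| ≤ H)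
    (hφ : Continuous φ)
    (hode : ∀ x > (0:ℝ), deriv (deriv φ) x = n x - (g (Φs x + φ x) - g (Φs x)))
    (h0 : φ 0 = 0) (ht : Tendsto φ atTop (nhds 0)) {x : ℝ} (hx : 0 ≤ x) :
    |φ x| ≤ H / m := by
  have hslope : ∀ a ∈ Icc (-1:ℝ) 2, ∀ b ∈ Icc (-1:ℝ) 2, a ≤ b → g b - g a ≤ -m * (b - a) :=
    (convex_Icc (-1:ℝ) 2).image_sub_le_mul_sub_of_deriv_le hg.continuous.continuousOn
      hg.differentiableOn fun s hs => hgm s (interior_subset hs)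
  have hcap : ∀ t : ℝ, m * min t 1 ≤ H → t ≤ H / m := by
    intro t h
    rcases le_total t 1 with h1 | h1
    · rw [min_eq_left h1] at h
      rw [le_div_iff₀ hm]; linarith
    · rw [min_eq_right h1] at h; linarith
  have hH0 : 0 ≤ H := (abs_nonneg _).trans (hn 1 one_pos)
  have hHm : 0 ≤ H / m := by positivity
  rw [abs_le]
  constructor
  · rcases le_or_gt 0 (φ x) with h | h
    · linarith
    obtain ⟨y, hy, hxy, hdd⟩ := exists_interior_max_of_pos (f := fun z => -φ z) hφ.neg
      (by simp [h0]) (by simpa using ht.neg) hx (by simpa using h)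
    have hdd' : deriv (deriv (fun z => -φ z)) y = -deriv (deriv φ) y := by
      have : deriv (fun z => -φ z) = fun z => -deriv φ z := by ext z; simp
      rw [this]; simp
    obtain ⟨hΦ0, hΦ1⟩ := hΦ y hy
    have ht0 : 0 < min (-φ y) 1 := lt_min (by linarith) one_pos
    have ht1 := min_le_right (-φ y) 1
    have ht2 := min_le_left (-φ y) 1
    have h1 := hslope (Φs y - min (-φ y) 1) ⟨by linarith, by linarith⟩ (Φs y)
      ⟨by linarith, by linarith⟩ (by linarith)
    have h2 : g (Φs y - min (-φ y) 1) ≤ g (Φs y + φ y) := hanti.antitone (by linarith)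
    have h3 := hode y hy
    have h4 := (abs_le.1 (hn y hy)).2
    have := hcap (-φ y) (by linarith)
    linarith
  · rcases le_or_gt (φ x) 0 with h | h
    · linarith
    obtain ⟨y, hy, hxy, hdd⟩ := exists_interior_max_of_pos hφ h0 ht hx h
    obtain ⟨hΦ0, hΦ1⟩ := hΦ y hy
    have ht0 : 0 < min (φ y) 1 := lt_min (by linarith) one_pos
    have ht1 := min_le_right (φ y) 1
    have ht2 := min_le_left (φ y) 1
    have h1 := hslope (Φs y) ⟨by linarith, by linarith⟩ (Φs y + min (φ y) 1)
      ⟨by linarith, by linarith⟩ (by linarith)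
    have h2 : g (Φs y + φ y) ≤ g (Φs y + min (φ y) 1) := hanti.antitone (by linarith)
    have h3 := hode y hy
    have h4 := (abs_le.1 (hn y hy)).1
    have := hcap (φ y) (by linarith)
    linarith

/-- Weighted energy estimate for a perturbation of the linear equation `φ'' - φ = n`. -/
theorem weighted_energy_estimates {n φ : ℝ → ℝ} {β k : ℝ} (hβ0 : 0 < β) (hβ1 : β < 1)
    (hk0 : 0 ≤ k) (hk1 : k ≤ 1 / 8) (hφ : ContDiff ℝ 2 φ) (h0 : φ 0 = 0)
    (hN : IntegrableOn (fun x => exp (β * x) * n x ^ 2) (Ioi 0))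
    (hP : IntegrableOn (fun x => exp (β * x) * φ x ^ 2) (Ioi 0))
    (hD : IntegrableOn (fun x => exp (β * x) * deriv φ x ^ 2) (Ioi 0))
    (hS : IntegrableOn (fun x => exp (β * x) * deriv (deriv φ) x ^ 2) (Ioi 0))
    (hode : ∀ x > (0:ℝ), |deriv (deriv φ) x - n x - φ x| ≤ k * |φ x|) :
    ((∫ x in Ioi (0:ℝ), exp (β * x) * φ x ^ 2)
        + 2 * (1 + β ^ 2 / (2 - β ^ 2)) * ∫ x in Ioi (0:ℝ), exp (β * x) * deriv φ x ^ 2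
      ≤ (1 + β ^ 2 / (2 - β ^ 2)) ^ 2 * (∫ x in Ioi (0:ℝ), exp (β * x) * n x ^ 2)
        + 32 * k * ∫ x in Ioi (0:ℝ), exp (β * x) * n x ^ 2) ∧
    ((∫ x in Ioi (0:ℝ), exp (β * x) * deriv (deriv φ) x ^ 2)
      ≤ (1 + β ^ 2 * (1 + β ^ 2 / (2 - β ^ 2)) ^ 2) * (∫ x in Ioi (0:ℝ), exp (β * x) * n x ^ 2)
        + 32 * k * ∫ x in Ioi (0:ℝ), exp (β * x) * n x ^ 2) := by
  have hc : Continuous φ := hφ.continuous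
  have hφ' : ContDiff ℝ 1 (deriv φ) := hφ.deriv'
  have hc' : Continuous (deriv φ) := hφ'.continuous
  have hc'' : Continuous (deriv (deriv φ)) := hφ'.continuous_deriv le_rfl
  have hexp : Continuous fun x => exp (β * x) := by fun_prop
  have hQ : IntegrableOn (fun x => exp (β * x) * (φ x * deriv (deriv φ) x)) (Ioi 0) :=
    Continuous.integrableOn_Ioi_of_abs_le (by fun_prop) (hP.add hS) fun x => by
      simp only [Pi.add_apply]
      rw [abs_mul, abs_of_pos (exp_pos _), ← mul_add]
      refine mul_le_mul_of_nonneg_left ?_ (exp_pos _).le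
      rw [abs_le]; constructor
      · nlinarith [sq_nonneg (φ x + deriv (deriv φ) x)]
      · nlinarith [sq_nonneg (φ x - deriv (deriv φ) x)]
  have hM : IntegrableOn (fun x => exp (β * x) * (φ x * deriv φ x)) (Ioi 0) :=
    Continuous.integrableOn_Ioi_of_abs_le (by fun_prop) (hP.add hD) fun x => by
      simp only [Pi.add_apply]
      rw [abs_mul, abs_of_pos (exp_pos _), ← mul_add]
      refine mul_le_mul_of_nonneg_left ?_ (exp_pos _).le
      rw [abs_le]; constructor
      · nlinarith [sq_nonneg (φ x + deriv φ x)]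
      · nlinarith [sq_nonneg (φ x - deriv φ x)]
  set P := ∫ x in Ioi (0:ℝ), exp (β * x) * φ x ^ 2
  set D := ∫ x in Ioi (0:ℝ), exp (β * x) * deriv φ x ^ 2
  set S := ∫ x in Ioi (0:ℝ), exp (β * x) * deriv (deriv φ) x ^ 2
  set N := ∫ x in Ioi (0:ℝ), exp (β * x) * n x ^ 2
  set Q := ∫ x in Ioi (0:ℝ), exp (β * x) * (φ x * deriv (deriv φ) x)
  have hlin (p d s q r : ℝ) : Integrable (fun x => exp (β * x) * (p * φ x ^ 2 + d * deriv φ x ^ 2 +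
        s * deriv (deriv φ) x ^ 2 + q * (φ x * deriv (deriv φ) x) + r * n x ^ 2))
        (volume.restrict (Ioi 0)) ∧
      ∫ x in Ioi (0:ℝ), exp (β * x) * (p * φ x ^ 2 + d * deriv φ x ^ 2 +
        s * deriv (deriv φ) x ^ 2 + q * (φ x * deriv (deriv φ) x) + r * n x ^ 2) =
      p * P + d * D + s * S + q * Q + r * N := by
    have e : (fun x => exp (β * x) * (p * φ x ^ 2 + d * deriv φ x ^ 2 +
        s * deriv (deriv φ) x ^ 2 + q * (φ x * deriv (deriv φ) x) + r * n x ^ 2)) =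
        fun x => p * (exp (β * x) * φ x ^ 2) + d * (exp (β * x) * deriv φ x ^ 2) +
        s * (exp (β * x) * deriv (deriv φ) x ^ 2) +
        q * (exp (β * x) * (φ x * deriv (deriv φ) x)) + r * (exp (β * x) * n x ^ 2) := by
      ext x; ring
    have i1 := hP.const_mul p
    have i2 := i1.add (hD.const_mul d)
    have i3 := i2.add (hS.const_mul s)
    have i4 := i3.add (hQ.const_mul q)
    have i5 := i4.add (hN.const_mul r)
    rw [e]
    refine ⟨i5, ?_⟩
    refine (integral_add' i4 (hN.const_mul r)).trans ?_
    rw [integral_add' i3 (hQ.const_mul q), integral_add' i2 (hS.const_mul s),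
      integral_add' i1 (hD.const_mul d)]
    simp only [integral_const_mul]
    rfl
  have hpos (p d s q r : ℝ) (h : ∀ x > 0, 0 ≤ p * φ x ^ 2 + d * deriv φ x ^ 2 +
        s * deriv (deriv φ) x ^ 2 + q * (φ x * deriv (deriv φ) x) + r * n x ^ 2) :
      0 ≤ p * P + d * D + s * S + q * Q + r * N := by
    rw [← (hlin p d s q r).2]
    exact setIntegral_nonneg measurableSet_Ioi fun x hx => mul_nonneg (exp_pos _).le (h x hx)
  have hid : D + Q = β ^ 2 / 2 * P := by
    have hder : ∀ x, HasDerivAt (fun x => exp (β * x) * (φ x * deriv φ x)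
        + -(β / 2) * (exp (β * x) * φ x ^ 2))
        (exp (β * x) * (-(β ^ 2 / 2) * φ x ^ 2 + 1 * deriv φ x ^ 2 +
        0 * deriv (deriv φ) x ^ 2 + 1 * (φ x * deriv (deriv φ) x) + 0 * n x ^ 2)) x := by
      intro x
      have d1 : HasDerivAt φ (deriv φ x) x := (hφ.differentiable two_ne_zero x).hasDerivAt
      have d2 : HasDerivAt (deriv φ) (deriv (deriv φ) x) x :=
        (hφ'.differentiable one_ne_zero x).hasDerivAt
      have de : HasDerivAt (fun x => exp (β * x)) (exp (β * x) * β) x := by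
        simpa using ((hasDerivAt_id x).const_mul β).exp
      refine ((de.fun_mul (d1.fun_mul d2)).fun_add
        ((de.fun_mul (d1.fun_pow 2)).const_mul (-(β / 2)))).congr_deriv ?_
      norm_num
      ring
    have hl := hlin (-(β ^ 2 / 2)) 1 0 1 0
    have ht := tendsto_zero_of_hasDerivAt_of_integrableOn_Ioi (fun x _ => hder x) hl.1
      (hM.add (hP.const_mul _))
    have hI := integral_Ioi_of_hasDerivAt_of_tendsto' (fun x _ => hder x) hl.1 ht
    rw [hl.2] at hI
    simp [h0] at hI
    linarith
  have hP0 : 0 ≤ P := by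
    have := hpos 1 0 0 0 0 fun x _ => by nlinarith [sq_nonneg (φ x)]
    linarith
  have hD0 : 0 ≤ D := by
    have := hpos 0 1 0 0 0 fun x _ => by nlinarith [sq_nonneg (deriv φ x)]
    linarith
  have hN0 : 0 ≤ N := by
    have := hpos 0 0 0 0 1 fun x _ => by nlinarith [sq_nonneg (n x)]
    linarith
  have hβ2 : β ^ 2 < 1 := by nlinarith
  have hden : 0 < 2 - β ^ 2 := by linarith
  set θ := 1 + β ^ 2 / (2 - β ^ 2) with hθ
  have hθβ : θ * β ^ 2 = 2 * θ - 2 := by rw [hθ]; field_simp; ring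
  have hθ1 : 1 ≤ θ := by
    have : 0 ≤ β ^ 2 / (2 - β ^ 2) := by positivity
    linarith
  have hθ2 : θ ≤ 2 := by nlinarith
  have herr : ∀ x > 0, ∃ e, deriv (deriv φ) x = n x + φ x + e ∧ |φ x * e| ≤ k * φ x ^ 2 ∧
      |n x * e| ≤ k / 2 * (n x ^ 2 + φ x ^ 2) ∧ e ^ 2 ≤ k * φ x ^ 2 := by
    intro x hx
    refine ⟨deriv (deriv φ) x - n x - φ x, by ring, ?_, ?_, ?_⟩
    · rw [abs_mul, ← sq_abs (φ x)]
      nlinarith [mul_le_mul_of_nonneg_left (hode x hx) (abs_nonneg (φ x))]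
    · rw [abs_mul, ← sq_abs (φ x), ← sq_abs (n x)]
      nlinarith [mul_le_mul_of_nonneg_left (hode x hx) (abs_nonneg (n x)),
        mul_nonneg hk0 (sq_nonneg (|n x| - |φ x|))]
    · have h1 := pow_le_pow_left₀ (abs_nonneg _) (hode x hx) 2
      rw [sq_abs, mul_pow, sq_abs] at h1
      refine h1.trans (mul_le_mul_of_nonneg_right ?_ (sq_nonneg _))
      nlinarith
  have hfirst : P + 2 * θ * D ≤ θ ^ 2 * N + 4 * k * P := by
    have := hpos (1 - 2 * θ + 4 * k) 0 0 (2 * θ) (θ ^ 2) ?_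
    · linear_combination this + 2 * θ * hid + P * hθβ
    intro x hx
    obtain ⟨e, he, h1, -⟩ := herr x hx
    rw [he]
    nlinarith [(abs_le.1 h1).1, sq_nonneg (φ x + θ * n x), mul_nonneg hk0 (sq_nonneg (φ x)),
      mul_nonneg (by linarith : 0 ≤ 2 - θ) (mul_nonneg hk0 (sq_nonneg (φ x))),
      mul_nonneg (by linarith : 0 ≤ θ) (by linarith [(abs_le.1 h1).1] :
        0 ≤ φ x * e + k * φ x ^ 2)]
  have hPN : P ≤ 8 * N := by
    nlinarith [mul_nonneg (by linarith : 0 ≤ θ) hD0, mul_le_mul_of_nonneg_right hk1 hP0,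
      mul_nonneg (by nlinarith : 0 ≤ 4 - θ ^ 2) hN0]
  have hkPN := mul_le_mul_of_nonneg_left hPN hk0
  have hkN := mul_nonneg hk0 hN0
  have hsecond : S ≤ 2 * Q + N - P + k * N + 2 * k * P := by
    have := hpos (-1 + 2 * k) 0 (-1) 2 (1 + k) ?_
    · linarith
    intro x hx
    obtain ⟨e, he, h1, h2, h3⟩ := herr x hx
    rw [he]
    nlinarith [(abs_le.1 h1).2, (abs_le.1 h2).2]
  refine ⟨by linarith, ?_⟩
  nlinarith [mul_nonneg (sq_nonneg (β * θ)) hN0, mul_nonneg (by linarith : 0 ≤ 1 - β ^ 2) hP0]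

/-- Near the origin, a `C²` function with slope `-1` at `0` has a Lipschitz-controlled
linearization error. -/
theorem exists_linearization_bound {g : ℝ → ℝ} (hg : ContDiff ℝ 2 g) (hg1 : deriv g 0 = -1) :
    ∃ L > 0, ∀ ε : ℝ, ∀ a b, |a| ≤ ε → |b| ≤ ε → a ∈ Icc (-1:ℝ) 2 → b ∈ Icc (-1:ℝ) 2 →
      |g a - g b - (b - a)| ≤ L * ε * |b - a| := by
  have hg' : ContDiff ℝ 1 (deriv g) := hg.deriv'
  obtain ⟨L, hL⟩ := (isCompact_Icc (a := (-1:ℝ)) (b := 2)).exists_bound_of_continuousOn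
    (hg'.continuous_deriv le_rfl).continuousOn
  refine ⟨max L 1, by positivity, fun ε a b ha hb ha' hb' => ?_⟩
  have hlip : ∀ s ∈ Icc (-1:ℝ) 2, |deriv g s + 1| ≤ max L 1 * |s| := fun s hs => by
    have := (convex_Icc (-1:ℝ) 2).norm_image_sub_le_of_norm_deriv_le (f := deriv g)
      (fun x _ => hg'.differentiable one_ne_zero x)
      (fun x hx => (hL x hx).trans (le_max_left L 1)) (x := 0) (y := s) (by norm_num) hs
    simpa [hg1] using this
  have hd : ∀ s, HasDerivAt (fun s => g s + s) (deriv g s + 1) s := fun s =>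
    (hg.differentiable two_ne_zero s).hasDerivAt.fun_add (hasDerivAt_id' s)
  have := ((convex_Icc (-1:ℝ) 2).inter (convex_Icc (-ε) ε)).norm_image_sub_le_of_norm_deriv_le
    (f := fun s => g s + s) (C := max L 1 * ε) (fun x _ => (hd x).differentiableAt)
    (fun x hx => by
      rw [(hd x).deriv]
      exact (hlip x hx.1).trans (mul_le_mul_of_nonneg_left (abs_le.2 hx.2) (by positivity)))
    (x := b) (y := a) ⟨hb', abs_le.1 hb⟩ ⟨ha', abs_le.1 ha⟩
  simp only [Real.norm_eq_abs] at this
  rw [abs_sub_comm b a]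
  convert this using 2
  ring

/-- sharp-constant weighted elliptic estimates, with `η(β) = β²/(2−β²)`:
`‖e^{βx/2}φ‖² + 2(1+η)‖e^{βx/2}∂_xφ‖² ≤ (1+η)²‖e^{βx/2}n‖² + C(Φ_b+‖n‖_{H¹})‖e^{βx/2}n‖²`
and `‖e^{βx/2}∂_{xx}φ‖² ≤ (1+β²(1+η)²)‖e^{βx/2}n‖² + C(Φ_b+‖n‖_{H¹})‖e^{βx/2}n‖²`,
where `δ₀, C` are independent of `β ∈ (0,1)`. -/
theorem elliptic_sharp_weighted_estimates
    (ne : ℝ → ℝ) (hne : ContDiff ℝ 2 ne) (hne0 : ne 0 = 1)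
    (hne1 : deriv ne 0 = -1) (hne' : ∀ s, deriv ne s < 0) :
    ∃ δ₀ > 0, ∃ C > 0, ∀ β : ℝ, 0 < β → β < 1 →
      ∀ (Φb : ℝ) (Φs n φ : ℝ → ℝ),
      0 < Φb → ContDiff ℝ 1 Φs →
      (∀ x ≥ (0:ℝ), 0 ≤ Φs x ∧ Φs x ≤ Φb ∧ |deriv Φs x| ≤ Φb) →
      ContDiff ℝ 1 n →
      (∫⁻ x in Set.Ioi (0:ℝ), ENNReal.ofReal
        (Real.exp (β*x) * ((n x)^2 + (deriv n x)^2))) < ⊤ →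
      ContDiff ℝ 2 φ →
      (∀ x > (0:ℝ), deriv (deriv φ) x = n x - (ne (Φs x + φ x) - ne (Φs x))) →
      φ 0 = 0 → Tendsto φ atTop (nhds 0) →
      (∫⁻ x in Set.Ioi (0:ℝ), ENNReal.ofReal (Real.exp (β*x) *
        ((φ x)^2 + (deriv φ x)^2 + (deriv^[2] φ x)^2))) < ⊤ →
      Φb + Real.sqrt (∫ x in Set.Ioi (0:ℝ), ((n x)^2 + (deriv n x)^2)) ≤ δ₀ →
      ((∫⁻ x in Set.Ioi (0:ℝ), ENNReal.ofReal (Real.exp (β*x) * (φ x)^2))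
          + ENNReal.ofReal (2 * (1 + β^2/(2-β^2))) *
            ∫⁻ x in Set.Ioi (0:ℝ), ENNReal.ofReal (Real.exp (β*x) * (deriv φ x)^2)
        ≤ ENNReal.ofReal ((1 + β^2/(2-β^2))^2) *
            (∫⁻ x in Set.Ioi (0:ℝ), ENNReal.ofReal (Real.exp (β*x) * (n x)^2))
          + ENNReal.ofReal (C * (Φb +
              Real.sqrt (∫ x in Set.Ioi (0:ℝ), ((n x)^2 + (deriv n x)^2)))) *
            ∫⁻ x in Set.Ioi (0:ℝ), ENNReal.ofReal (Real.exp (β*x) * (n x)^2)) ∧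
      ((∫⁻ x in Set.Ioi (0:ℝ), ENNReal.ofReal (Real.exp (β*x) * (deriv^[2] φ x)^2))
        ≤ ENNReal.ofReal (1 + β^2 * (1 + β^2/(2-β^2))^2) *
            (∫⁻ x in Set.Ioi (0:ℝ), ENNReal.ofReal (Real.exp (β*x) * (n x)^2))
          + ENNReal.ofReal (C * (Φb +
              Real.sqrt (∫ x in Set.Ioi (0:ℝ), ((n x)^2 + (deriv n x)^2)))) *
            ∫⁻ x in Set.Ioi (0:ℝ), ENNReal.ofReal (Real.exp (β*x) * (n x)^2)) := by
  obtain ⟨L, hL, hlin⟩ := exists_linearization_bound hne hne1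
  obtain ⟨m, hm, hnm⟩ : ∃ m > 0, ∀ s ∈ Icc (-1:ℝ) 2, deriv ne s ≤ -m := by
    obtain ⟨s, -, hs⟩ := (isCompact_Icc (a := (-1:ℝ)) (b := 2)).exists_isMaxOn
      (nonempty_Icc.2 (by norm_num)) (hne.continuous_deriv one_le_two).continuousOn
    exact ⟨-deriv ne s, by linarith [hne' s], fun t ht => by simpa using hs ht⟩
  have hK : 0 < L * (1 + 1 / m) := by positivity
  refine ⟨min (min 1 (m / 2)) (1 / (8 * (L * (1 + 1 / m)))), by positivity,
    32 * (L * (1 + 1 / m)), by positivity, ?_⟩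
  intro β hβ0 hβ1 Φb Φs n φ hΦb hΦs hΦ hn hnint hφ hode h0 ht hφint hδ
  have hc := hφ.continuous
  have hφ' : ContDiff ℝ 1 (deriv φ) := hφ.deriv'
  have hc' : Continuous (deriv φ) := hφ'.continuous
  have hc'' : Continuous (deriv (deriv φ)) := hφ'.continuous_deriv le_rfl
  have hnc := hn.continuous
  have hnc' : Continuous (deriv n) := hn.continuous_deriv le_rfl
  change (∫⁻ x in Ioi (0:ℝ), ENNReal.ofReal (exp (β * x) *
    (φ x ^ 2 + deriv φ x ^ 2 + deriv (deriv φ) x ^ 2))) < ⊤ at hφint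
  have hφI := (lintegral_ofReal_ne_top_iff_integrable
    (Continuous.aestronglyMeasurable (by fun_prop))
    (Eventually.of_forall fun x => by positivity)).1 hφint.ne
  have hnI := (lintegral_ofReal_ne_top_iff_integrable
    (Continuous.aestronglyMeasurable (by fun_prop))
    (Eventually.of_forall fun x => by positivity)).1 hnint.ne
  have hN : IntegrableOn (fun x => exp (β * x) * n x ^ 2) (Ioi 0) :=
    Continuous.integrableOn_Ioi_of_abs_le (by fun_prop) hnI fun x => by
      rw [abs_of_nonneg (by positivity)]
      gcongr; linarith [sq_nonneg (deriv n x)]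
  have hP : IntegrableOn (fun x => exp (β * x) * φ x ^ 2) (Ioi 0) :=
    Continuous.integrableOn_Ioi_of_abs_le (by fun_prop) hφI fun x => by
      rw [abs_of_nonneg (by positivity)]
      gcongr; linarith [sq_nonneg (deriv φ x), sq_nonneg (deriv (deriv φ) x)]
  have hD : IntegrableOn (fun x => exp (β * x) * deriv φ x ^ 2) (Ioi 0) :=
    Continuous.integrableOn_Ioi_of_abs_le (by fun_prop) hφI fun x => by
      rw [abs_of_nonneg (by positivity)]
      gcongr; linarith [sq_nonneg (φ x), sq_nonneg (deriv (deriv φ) x)]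
  have hS : IntegrableOn (fun x => exp (β * x) * deriv (deriv φ) x ^ 2) (Ioi 0) :=
    Continuous.integrableOn_Ioi_of_abs_le (by fun_prop) hφI fun x => by
      rw [abs_of_nonneg (by positivity)]
      gcongr; linarith [sq_nonneg (φ x), sq_nonneg (deriv φ x)]
  have hH1 : IntegrableOn (fun x => n x ^ 2 + deriv n x ^ 2) (Ioi 0) := by
    refine Integrable.mono' hnI (Continuous.aestronglyMeasurable (by fun_prop)) ?_
    refine (ae_restrict_iff' measurableSet_Ioi).2 (Eventually.of_forall fun x hx => ?_)
    have : 1 ≤ exp (β * x) := one_le_exp (mul_nonneg hβ0.le (le_of_lt hx))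
    rw [Real.norm_eq_abs, abs_of_nonneg (by positivity)]
    exact le_mul_of_one_le_left (by positivity) this
  set H := √(∫ x in Ioi (0:ℝ), (n x ^ 2 + deriv n x ^ 2))
  have hH0 : 0 ≤ H := Real.sqrt_nonneg _
  obtain ⟨hδ', hδK⟩ := le_min_iff.1 hδ
  obtain ⟨hδ1, hδm⟩ := le_min_iff.1 hδ'
  have hΦI : ∀ x > 0, Φs x ∈ Icc (0:ℝ) 1 := fun x hx =>
    ⟨(hΦ x (le_of_lt hx)).1, (hΦ x (le_of_lt hx)).2.1.trans (by linarith)⟩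
  have hφH : ∀ x ≥ 0, |φ x| ≤ H / m := fun x hx =>
    abs_le_div_of_semilinear_ode (hne.differentiable two_ne_zero) (strictAnti_of_deriv_neg hne')
      hm hnm (by linarith) hΦI
      (fun y hy => abs_le_sqrt_integral_sq_add_deriv_sq hn hH1 (le_of_lt hy)) hc hode h0 ht hx
  have hHm : H / m ≤ 1 := by rw [div_le_one hm]; linarith
  have hHm0 : 0 ≤ H / m := by positivity
  have hclose : ∀ x > (0:ℝ), |deriv (deriv φ) x - n x - φ x| ≤
      L * (1 + 1 / m) * (Φb + H) * |φ x| := fun x hx => by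
    have hx' : x ≥ 0 := le_of_lt hx
    obtain ⟨hΦ0, hΦ1⟩ := hΦI x hx
    have hΦle := (hΦ x hx').2.1
    obtain ⟨h1, h2⟩ := abs_le.1 (hφH x hx')
    have h3 := hlin (Φb + H / m) (Φs x) (Φs x + φ x)
      (abs_le.2 ⟨by linarith, by linarith⟩) (abs_le.2 ⟨by linarith, by linarith⟩)
      ⟨by linarith, by linarith⟩ ⟨by linarith, by linarith⟩
    rw [add_sub_cancel_left] at h3
    rw [hode x hx]
    calc _ = |ne (Φs x) - ne (Φs x + φ x) - φ x| := by congr 1; ring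
      _ ≤ L * (Φb + H / m) * |φ x| := h3
      _ ≤ _ := by
        refine mul_le_mul_of_nonneg_right ?_ (abs_nonneg _)
        rw [mul_assoc]
        refine mul_le_mul_of_nonneg_left ?_ hL.le
        have : 0 ≤ Φb / m := by positivity
        calc Φb + H / m ≤ Φb + H / m + (Φb / m + H) := by linarith
          _ = _ := by ring
  have hk : L * (1 + 1 / m) * (Φb + H) ≤ 1 / 8 := by
    rw [le_div_iff₀ (by positivity)] at hδK
    linarith
  obtain ⟨hi, hii⟩ := weighted_energy_estimates hβ0 hβ1 (by positivity) hk hφ h0 hN hP hD hS hclose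
  have hden : 0 < 2 - β ^ 2 := by nlinarith
  have hlint {f : ℝ → ℝ} (hf : IntegrableOn (fun x => exp (β * x) * f x ^ 2) (Ioi 0)) :
      ∫⁻ x in Ioi (0:ℝ), ENNReal.ofReal (exp (β * x) * f x ^ 2) =
        ENNReal.ofReal (∫ x in Ioi (0:ℝ), exp (β * x) * f x ^ 2) :=
    (ofReal_integral_eq_lintegral_ofReal hf (Eventually.of_forall fun x => by positivity)).symm
  have hnn (f : ℝ → ℝ) : 0 ≤ ∫ x in Ioi (0:ℝ), exp (β * x) * f x ^ 2 :=
    integral_nonneg fun x => by positivity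
  have hN0 := hnn n
  have hP0 := hnn φ
  have hD0 := hnn (deriv φ)
  change _ ∧ ∫⁻ x in Ioi (0:ℝ), ENNReal.ofReal (exp (β * x) * deriv (deriv φ) x ^ 2) ≤ _
  rw [hlint hN, hlint hP, hlint hD, hlint hS]
  constructor <;>
  · repeat rw [← ENNReal.ofReal_mul (by positivity)]
    repeat rw [← ENNReal.ofReal_add (by positivity) (by positivity)]
    exact ENNReal.ofReal_le_ofReal (by linarith)
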